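/- For every real number a, every integer N ≥ 1 and every z ∈ ℂ, one has |cosh(z/N) − cosh(a·z/N)| ≤ (|a²−1|/(2N²))·|z|²·exp((α+1)·|z|/N), where α := max(1, |a|). -/

import Mathlib

/-!
With `u = z / N` and `v = a z / N`, write `u = p + q`, `v = p - q`, where `p = (1 + a) z / (2N)` and
`q = (1 - a) z / (2N)`. The addition formulas give `cosh u - cosh v = 2 sinh p sinh q`, and
`‖sinh w‖ ≤ ‖w‖ exp ‖w‖` (`norm_sinh_le_mul_exp`) bounds this by `2 ‖p‖ ‖q‖ exp (‖p‖ + ‖q‖)`.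
Here `2 ‖p‖ ‖q‖ = |a² - 1| ‖z‖² / (2N²)`, while `‖p‖ + ‖q‖ ≤ (1 + |a|) ‖z‖ / N`, and
`|a| ≤ max 1 |a|`.
-/

/-- Obtained from `sinh w = ((exp w - 1) - (exp (-w) - 1)) / 2` and
`‖exp w - 1‖ ≤ ‖w‖ exp ‖w‖`. -/
lemma norm_sinh_le_mul_exp (w : ℂ) : ‖Complex.sinh w‖ ≤ ‖w‖ * Real.exp ‖w‖ := by
  have h1 := Complex.norm_exp_sub_sum_le_norm_mul_exp w 1
  have h2 := Complex.norm_exp_sub_sum_le_norm_mul_exp (-w) 1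
  simp only [Finset.sum_range_one, pow_zero, Nat.factorial_zero, Nat.cast_one, div_one, pow_one,
    norm_neg] at h1 h2
  have h : Complex.sinh w = ((Complex.exp w - 1) - (Complex.exp (-w) - 1)) / 2 := by
    rw [Complex.sinh]; ring
  have h3 := norm_sub_le (Complex.exp w - 1) (Complex.exp (-w) - 1)
  rw [h, norm_div, Complex.norm_ofNat]
  linarith

theorem cosh_difference_estimate (a : ℝ) (N : ℕ) (hN : 1 ≤ N) (z : ℂ) :
    ‖Complex.cosh (z / N) - Complex.cosh ((a : ℂ) * z / N)‖ ≤
      |a ^ 2 - 1| / (2 * (N : ℝ) ^ 2) * ‖z‖ ^ 2 *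
        Real.exp ((max 1 |a| + 1) * ‖z‖ / N) := by
  have hN0 : (0 : ℝ) < N := by exact_mod_cast hN
  obtain ⟨p, hp⟩ : ∃ p : ℂ, p = ((1 + a : ℝ) : ℂ) * z / (2 * N) := ⟨_, rfl⟩
  obtain ⟨q, hq⟩ : ∃ q : ℂ, q = ((1 - a : ℝ) : ℂ) * z / (2 * N) := ⟨_, rfl⟩
  have hu : z / N = p + q := by rw [hp, hq]; push_cast; ring
  have hv : (a : ℂ) * z / N = p - q := by rw [hp, hq]; push_cast; ring
  have hpn : ‖p‖ = |1 + a| * ‖z‖ / (2 * N) := by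
    rw [hp, norm_div, norm_mul, norm_mul, Complex.norm_real, Complex.norm_natCast,
      Complex.norm_ofNat, Real.norm_eq_abs]
  have hqn : ‖q‖ = |1 - a| * ‖z‖ / (2 * N) := by
    rw [hq, norm_div, norm_mul, norm_mul, Complex.norm_real, Complex.norm_natCast,
      Complex.norm_ofNat, Real.norm_eq_abs]
  have hprod : 2 * (‖p‖ * ‖q‖) = |a ^ 2 - 1| / (2 * (N : ℝ) ^ 2) * ‖z‖ ^ 2 := by
    have : |a ^ 2 - 1| = |1 + a| * |1 - a| := by
      rw [← abs_mul, ← abs_neg]; ring_nf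
    rw [hpn, hqn, this]
    field_simp
  have hsum : ‖p‖ + ‖q‖ ≤ (max 1 |a| + 1) * ‖z‖ / N := by
    have h1 : |1 + a| ≤ 1 + |a| := by simpa using abs_add_le 1 a
    have h2 : |1 - a| ≤ 1 + |a| := by simpa using abs_sub 1 a
    have h3 := le_max_right 1 |a|
    have h4 : ‖p‖ + ‖q‖ = (|1 + a| + |1 - a|) / 2 * ‖z‖ / N := by
      rw [hpn, hqn]; ring
    rw [h4]
    gcongr
    linarith
  have hfac : Complex.cosh (p + q) - Complex.cosh (p - q)
      = 2 * (Complex.sinh p * Complex.sinh q) := by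
    rw [Complex.cosh_add, Complex.cosh_sub]; ring
  rw [hu, hv, hfac, norm_mul, norm_mul, Complex.norm_ofNat, ← hprod]
  calc 2 * (‖Complex.sinh p‖ * ‖Complex.sinh q‖)
      ≤ 2 * ((‖p‖ * Real.exp ‖p‖) * (‖q‖ * Real.exp ‖q‖)) := by
        gcongr <;> exact norm_sinh_le_mul_exp _
    _ = 2 * (‖p‖ * ‖q‖) * Real.exp (‖p‖ + ‖q‖) := by rw [Real.exp_add]; ring
    _ ≤ _ := by gcongr
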